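/- Let M ≥ 1, let Q be an M×M complex Hermitian positive definite matrix, let F be an M×M complex Hermitian matrix, and let t₁, t₂ ∈ ℝ. Then (π^M det Q)⁻¹ ∫_{ℂ^M} exp(i t₁ (wᴴ F w) + i t₂ (wᴴ w)) · exp(−wᴴ Q⁻¹ w) dw = (det Q · det(Q⁻¹ − i t₁ F − i t₂ I))⁻¹; that is, the joint characteristic function of the quadratic forms S = wᴴ F w and P = wᴴ w under the complex Gaussian density π^{−M} (det Q)⁻¹ exp(−wᴴ Q⁻¹ w) equals 1/(det Q · det(Q⁻¹ − i t₁ F − i t₂ I)). -/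

import Mathlib

open Matrix MeasureTheory Complex
open scoped ComplexOrder

/-!
Write the integrand as `exp (-wᴴ A w)` and split `A = ℜ A + i ℑ A` with `ℜ A` and `ℑ A` Hermitian.
When `ℜ A` is positive definite, a single congruence `C` turns `ℜ A` into the identity and `ℑ A`
into a real diagonal matrix, so the substitution `w = C z` reduces the Gaussian integral to a
product of integrals over `ℂ` of `exp (-(1 + i d j) |z j|²)`. The Jacobian `|det C|²` is exactly the
factor relating `det (Cᴴ A C)` to `det A`, and the integral equals `πⁿ / det A`. For the
characteristic function, `A = Q⁻¹ - i (t₁ F + t₂ I)` has real part `Q⁻¹` when `t₁` and `t₂` are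
real.
-/

open scoped ComplexStarModule

theorem realPart_I_mul_ofReal_smul {A : Type*} [AddCommGroup A] [Module ℂ A] [StarAddMonoid A]
    [StarModule ℂ A] {a : A} (ha : IsSelfAdjoint a) (t : ℝ) : ℜ ((I * t) • a) = 0 := by
  simp [realPart_smul, ha.imaginaryPart]

section Congruence

variable {n : Type*} [Fintype n]

theorem star_mulVec_dotProduct_mulVec_mulVec {m α : Type*} [Fintype m] [CommSemiring α]
    [StarRing α] (A : Matrix m m α) (C : Matrix m n α) (z : n → α) :
    star (C *ᵥ z) ⬝ᵥ (A *ᵥ (C *ᵥ z)) = star z ⬝ᵥ ((Cᴴ * A * C) *ᵥ z) := by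
  rw [star_mulVec, ← dotProduct_mulVec, mulVec_mulVec, mulVec_mulVec, Matrix.mul_assoc]

variable [DecidableEq n]

theorem det_conjTranspose_mul_mul_same {α : Type*} [CommRing α] [StarRing α]
    (A C : Matrix n n α) : (Cᴴ * A * C).det = star C.det * C.det * A.det := by
  rw [det_mul, det_mul, det_conjTranspose, mul_right_comm]

variable {𝕜 : Type*} [RCLike 𝕜]

open scoped MatrixOrder in
theorem exists_isUnit_conjTranspose_mul_mul_eq_one {P : Matrix n n 𝕜} (hP : P.PosDef) :
    ∃ C : Matrix n n 𝕜, IsUnit C ∧ Cᴴ * P * C = 1 := by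
  obtain ⟨B, hB, rfl⟩ :=
    CStarAlgebra.isStrictlyPositive_iff_eq_star_mul_self.mp hP.isStrictlyPositive
  refine ⟨B⁻¹, isUnit_nonsing_inv_iff.mpr hB, ?_⟩
  have hBB : B * B⁻¹ = 1 := mul_nonsing_inv B ((isUnit_iff_isUnit_det B).mp hB)
  calc B⁻¹ᴴ * (Bᴴ * B) * B⁻¹ = (B * B⁻¹)ᴴ * (B * B⁻¹) := by
        rw [conjTranspose_mul]; simp only [Matrix.mul_assoc]
    _ = 1 := by rw [hBB, conjTranspose_one, one_mul]

theorem exists_isUnit_conjTranspose_mul_mul_eq_one_and_diagonal {P H : Matrix n n 𝕜}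
    (hP : P.PosDef) (hH : H.IsHermitian) :
    ∃ (C : Matrix n n 𝕜) (d : n → ℝ), IsUnit C ∧ Cᴴ * P * C = 1 ∧
      Cᴴ * H * C = diagonal (RCLike.ofReal ∘ d) := by
  obtain ⟨B, hB, hBP⟩ := exists_isUnit_conjTranspose_mul_mul_eq_one hP
  have hK : (Bᴴ * H * B).IsHermitian := isHermitian_conjTranspose_mul_mul B hH
  let U : Matrix n n 𝕜 := hK.eigenvectorUnitary
  have hU : Uᴴ * U = 1 := Unitary.coe_star_mul_self hK.eigenvectorUnitary
  have hdiag : Uᴴ * (Bᴴ * H * B) * U = diagonal (RCLike.ofReal ∘ hK.eigenvalues) := by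
    rw [← hK.conjStarAlgAut_star_eigenvectorUnitary, Unitary.conjStarAlgAut_star_apply]
    rfl
  have hassoc (A : Matrix n n 𝕜) : (B * U)ᴴ * A * (B * U) = Uᴴ * (Bᴴ * A * B) * U := by
    simp only [conjTranspose_mul, Matrix.mul_assoc]
  refine ⟨B * U, hK.eigenvalues, hB.mul (Unitary.isUnit_coe (U := hK.eigenvectorUnitary)), ?_, ?_⟩
  · rw [hassoc, hBP, mul_one, hU]
  · rw [hassoc, hdiag]

end Congruence

section ChangeOfVariables

variable {F : Type*} [NormedAddCommGroup F] [NormedSpace ℝ F]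

theorem integral_comp_linearMap {E : Type*} [NormedAddCommGroup E] [NormedSpace ℝ E]
    [MeasurableSpace E] [BorelSpace E] [FiniteDimensional ℝ E] (μ : Measure E)
    [μ.IsAddHaarMeasure] {L : E →ₗ[ℝ] E} (hL : LinearMap.det L ≠ 0) (f : E → F) :
    ∫ x, f (L x) ∂μ = |(LinearMap.det L)⁻¹| • ∫ x, f x ∂μ := by
  have hemb : MeasurableEmbedding L :=
    (L.equivOfDetNeZero hL).toContinuousLinearEquiv.toHomeomorph.measurableEmbedding
  rw [← hemb.integral_map, Measure.map_linearMap_addHaar_eq_smul_addHaar μ hL,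
    integral_smul_measure, ENNReal.toReal_ofReal (abs_nonneg _)]

theorem integral_comp_mulVec {n : Type*} [Fintype n] [DecidableEq n] {C : Matrix n n ℂ}
    (hC : IsUnit C) (f : (n → ℂ) → F) :
    ∫ z, f (C *ᵥ z) = (normSq C.det)⁻¹ • ∫ w, f w := by
  have hdet : LinearMap.det ((toLin' C).restrictScalars ℝ) = normSq C.det := by
    rw [LinearMap.det_restrictScalars, LinearMap.det_toLin', Algebra.norm_complex_apply]
  have hdet0 : LinearMap.det ((toLin' C).restrictScalars ℝ) ≠ 0 := by
    rw [hdet]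
    exact (normSq_pos.mpr ((isUnit_iff_isUnit_det C).mp hC).ne_zero).ne'
  simpa [hdet, abs_of_nonneg (normSq_nonneg _)] using integral_comp_linearMap volume hdet0 f

end ChangeOfVariables

section GaussianIntegral

theorem integral_cexp_neg_sum_mul_sq_norm {ι : Type*} [Fintype ι] {V : ι → Type*}
    [∀ i, NormedAddCommGroup (V i)] [∀ i, InnerProductSpace ℝ (V i)]
    [∀ i, FiniteDimensional ℝ (V i)] [∀ i, MeasurableSpace (V i)] [∀ i, BorelSpace (V i)]
    {b : ι → ℂ} (hb : ∀ i, 0 < (b i).re) :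
    ∫ v : ∀ i, V i, cexp (-∑ i, b i * ‖v i‖ ^ 2) =
      ∏ i, (Real.pi / b i) ^ (Module.finrank ℝ (V i) / 2 : ℂ) := by
  simp_rw [← Finset.sum_neg_distrib, Complex.exp_sum, ← neg_mul]
  rw [integral_fintype_prod_volume_eq_prod fun i (x : V i) ↦ cexp (-b i * ‖x‖ ^ 2)]
  exact Finset.prod_congr rfl fun i _ ↦ GaussianFourier.integral_cexp_neg_mul_sq_norm (hb i)

variable {n : Type*} [Fintype n] [DecidableEq n]

theorem integral_cexp_neg_star_dotProduct_diagonal_mulVec {b : n → ℂ} (hb : ∀ i, 0 < (b i).re) :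
    ∫ z : n → ℂ, cexp (-(star z ⬝ᵥ (diagonal b *ᵥ z))) =
      Real.pi ^ Fintype.card n / (diagonal b).det := by
  have hform (z : n → ℂ) : star z ⬝ᵥ (diagonal b *ᵥ z) = ∑ i, b i * ‖z i‖ ^ 2 := by
    refine Finset.sum_congr rfl fun i _ ↦ ?_
    rw [mulVec_diagonal, Pi.star_apply, ← conj_mul', starRingEnd_apply, mul_left_comm]
  simp_rw [hform, integral_cexp_neg_sum_mul_sq_norm hb, det_diagonal]
  simp [finrank_real_complex, Finset.prod_div_distrib]

theorem integral_cexp_neg_star_dotProduct_mulVec {A : Matrix n n ℂ}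
    (hA : (ℜ A : Matrix n n ℂ).PosDef) :
    ∫ w : n → ℂ, cexp (-(star w ⬝ᵥ (A *ᵥ w))) = Real.pi ^ Fintype.card n / A.det := by
  obtain ⟨C, d, hC, hre, him⟩ :=
    exists_isUnit_conjTranspose_mul_mul_eq_one_and_diagonal hA (ℑ A).2.isHermitian
  have hdiag : Cᴴ * A * C = diagonal fun i ↦ 1 + I * d i := by
    rw [← realPart_add_I_smul_imaginaryPart A, mul_add, add_mul, hre, Matrix.mul_smul,
      Matrix.smul_mul, him, ← diagonal_one, ← diagonal_smul, diagonal_add]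
    rfl
  have hsubst : ∫ z : n → ℂ, cexp (-(star z ⬝ᵥ ((Cᴴ * A * C) *ᵥ z))) =
      (normSq C.det : ℂ)⁻¹ * ∫ w : n → ℂ, cexp (-(star w ⬝ᵥ (A *ᵥ w))) := by
    simp_rw [← star_mulVec_dotProduct_mulVec_mulVec]
    rw [integral_comp_mulVec hC fun w ↦ cexp (-(star w ⬝ᵥ (A *ᵥ w))), real_smul, ofReal_inv]
  have hjac : (normSq C.det : ℂ) ≠ 0 :=
    ofReal_ne_zero.mpr (normSq_pos.mpr ((isUnit_iff_isUnit_det C).mp hC).ne_zero).ne'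
  have hgauss : ∫ z : n → ℂ, cexp (-(star z ⬝ᵥ ((Cᴴ * A * C) *ᵥ z))) =
      Real.pi ^ Fintype.card n / (Cᴴ * A * C).det := by
    rw [hdiag]
    exact integral_cexp_neg_star_dotProduct_diagonal_mulVec (by simp)
  calc ∫ w : n → ℂ, cexp (-(star w ⬝ᵥ (A *ᵥ w)))
      = normSq C.det * ∫ z : n → ℂ, cexp (-(star z ⬝ᵥ ((Cᴴ * A * C) *ᵥ z))) := by
        rw [hsubst, mul_inv_cancel_left₀ hjac]
    _ = normSq C.det * (Real.pi ^ Fintype.card n / (normSq C.det * A.det)) := by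
        rw [hgauss, det_conjTranspose_mul_mul_same, ← starRingEnd_apply, ← normSq_eq_conj_mul_self]
    _ = Real.pi ^ Fintype.card n / A.det := by
        rw [← mul_div_assoc, mul_div_mul_left _ _ hjac]

end GaussianIntegral

theorem joint_characteristic_function_quadratic_forms_general {n : Type*} [Fintype n]
    [DecidableEq n] {Q F : Matrix n n ℂ} (hQ : Q.PosDef) {t₁ t₂ : ℂ}
    (ht : (Q⁻¹ - ℜ ((I * t₁) • F + (I * t₂) • (1 : Matrix n n ℂ))).PosDef) :
    ((Real.pi : ℂ) ^ Fintype.card n * Q.det)⁻¹ *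
        ∫ w : n → ℂ, cexp (I * t₁ * (star w ⬝ᵥ (F *ᵥ w)) + I * t₂ * (star w ⬝ᵥ w)) *
          cexp (-(star w ⬝ᵥ (Q⁻¹ *ᵥ w))) =
      (Q.det * (Q⁻¹ - (I * t₁) • F - (I * t₂) • 1).det)⁻¹ := by
  have hre : (ℜ (Q⁻¹ - (I * t₁) • F - (I * t₂) • 1) : Matrix n n ℂ).PosDef := by
    rwa [sub_sub, map_sub, AddSubgroupClass.coe_sub, hQ.inv.isHermitian.isSelfAdjoint.coe_realPart]
  have hform (w : n → ℂ) :
      cexp (I * t₁ * (star w ⬝ᵥ (F *ᵥ w)) + I * t₂ * (star w ⬝ᵥ w)) *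
          cexp (-(star w ⬝ᵥ (Q⁻¹ *ᵥ w))) =
        cexp (-(star w ⬝ᵥ ((Q⁻¹ - (I * t₁) • F - (I * t₂) • 1) *ᵥ w))) := by
    rw [← Complex.exp_add]
    simp only [sub_mulVec, smul_mulVec, one_mulVec, dotProduct_sub, dotProduct_smul, smul_eq_mul]
    ring_nf
  have hpi : (Real.pi : ℂ) ^ Fintype.card n ≠ 0 :=
    pow_ne_zero _ (ofReal_ne_zero.mpr Real.pi_ne_zero)
  simp_rw [hform, integral_cexp_neg_star_dotProduct_mulVec hre]
  field_simp

/-- Joint characteristic function of the quadratic forms `S = wᴴ F w` and `P = wᴴ w`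
under the complex Gaussian density `π^{-M} (det Q)⁻¹ exp (-wᴴ Q⁻¹ w)`:
`(π^M det Q)⁻¹ ∫ exp (i t₁ wᴴFw + i t₂ wᴴw) exp (-wᴴ Q⁻¹ w) dw
  = (det Q · det (Q⁻¹ - i t₁ F - i t₂ I))⁻¹`. -/
theorem joint_characteristic_function_quadratic_forms (M : ℕ) (hM : 1 ≤ M)
    (Q F : Matrix (Fin M) (Fin M) ℂ) (hQ : Q.PosDef) (hF : F.IsHermitian) (t₁ t₂ : ℝ) :
    ((Real.pi : ℂ) ^ M * Q.det)⁻¹ *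
        ∫ w : Fin M → ℂ,
          Complex.exp (Complex.I * t₁ * (star w ⬝ᵥ (F *ᵥ w)) +
              Complex.I * t₂ * (star w ⬝ᵥ w)) *
            Complex.exp (-(star w ⬝ᵥ (Q⁻¹ *ᵥ w))) =
      (Q.det * (Q⁻¹ - (Complex.I * t₁) • F - (Complex.I * t₂) • 1).det)⁻¹ := by
  have hre : ℜ ((I * t₁) • F + (I * t₂) • (1 : Matrix (Fin M) (Fin M) ℂ)) = 0 := by
    rw [map_add, realPart_I_mul_ofReal_smul hF.isSelfAdjoint,
      realPart_I_mul_ofReal_smul (IsSelfAdjoint.one _), add_zero]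
  simpa only [Fintype.card_fin] using
    joint_characteristic_function_quadratic_forms_general hQ (t₁ := t₁) (t₂ := t₂)
      (by simpa [hre] using hQ)
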